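/- Tightness of the factor 2 for cCHASE: fix β > 0, 0 < δ < 1 and T ≥ 2, and consider the instance with g_1(0) = δβ, g_1(1) = 0, and g_t(0) = 0, g_t(1) = δβ for all t = 2,…,T. Then the fractional schedule produced by cCHASE is x_1 = δ and x_t = 0 for t ≥ 2, its cost is CCost = 2δβ − δ²β, and cOpt = δβ. Consequently, for every ε > 0 there is an instance on which CCost(cCHASE) ≥ (2 − ε)·cOpt, so the competitive ratio of cCHASE is exactly 2. -/

import Mathlib

/-- The fractional cost `CCost` of a schedule `x`: the operating cost at time
`t` is `(1 − x t)·g_t(0) + x t·g_t(1)`, plus the switching cost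
`β·(x t − x (t−1))⁺`. -/
noncomputable def cost (T : ℕ) (β : ℝ) (g0 g1 : ℕ → ℝ) (x : ℕ → ℝ) : ℝ :=
  ∑ t ∈ Finset.Icc 1 T, ((1 - x t) * g0 t + x t * g1 t + β * max (x t - x (t - 1)) 0)

/-- The cumulative cost difference `Δ(t)`, with `Δ(0) = −β` and
`Δ(t) = min{0, max{−β, Δ(t−1) + (g_t(0) − g_t(1))}}`. -/
noncomputable def Δfun (β : ℝ) (g0 g1 : ℕ → ℝ) : ℕ → ℝ
  | 0 => -β
  | t + 1 => min 0 (max (-β) (Δfun β g0 g1 t + (g0 (t + 1) - g1 (t + 1))))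

/-- The fractional offline optimal value `cOpt` of problem cSP: the infimum of
`CCost` over all fractional schedules in `[0,1]` starting at `0`. -/
noncomputable def copt (T : ℕ) (β : ℝ) (g0 g1 : ℕ → ℝ) : ℝ :=
  sInf {c : ℝ | ∃ x : ℕ → ℝ, (∀ t, 0 ≤ x t ∧ x t ≤ 1) ∧ x 0 = 0 ∧ c = cost T β g0 g1 x}

theorem core_aux (β δ : ℝ) (hβ : 0 < β) (hδ0 : 0 < δ) (hδ1 : δ < 1)
    (T : ℕ) (hT : 2 ≤ T) (g0 g1 : ℕ → ℝ)
    (hg0 : ∀ t, 1 ≤ t → t ≤ T → g0 t = if t = 1 then δ * β else 0)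
    (hg1 : ∀ t, 1 ≤ t → t ≤ T → g1 t = if t = 1 then 0 else δ * β) :
    (β + Δfun β g0 g1 1) / β = δ ∧
    (∀ t, 2 ≤ t → t ≤ T → (β + Δfun β g0 g1 t) / β = 0) ∧
    cost T β g0 g1 (fun t => (β + Δfun β g0 g1 t) / β) = 2 * δ * β - δ ^ 2 * β ∧
    copt T β g0 g1 = δ * β := by
  have hp : 0 < δ * β := mul_pos hδ0 hβ
  have hlt : δ * β < β := by nlinarith
  have h01 : g0 1 = δ * β := by simpa using hg0 1 le_rfl (by omega)
  have h11 : g1 1 = 0 := by simpa using hg1 1 le_rfl (by omega)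
  have h0t : ∀ t, 2 ≤ t → t ≤ T → g0 t = 0 := by
    intro t h1 h2
    rw [hg0 t (by omega) h2, if_neg (by omega)]
  have h1t : ∀ t, 2 ≤ t → t ≤ T → g1 t = δ * β := by
    intro t h1 h2
    rw [hg1 t (by omega) h2, if_neg (by omega)]
  have D0 : Δfun β g0 g1 0 = -β := rfl
  have D1 : Δfun β g0 g1 1 = -β + δ * β := by
    change min 0 (max (-β) (Δfun β g0 g1 0 + (g0 1 - g1 1))) = _
    rw [D0, h01, h11, max_eq_right (by linarith), min_eq_right (by linarith)]
    ring
  have Dt : ∀ t, 2 ≤ t → t ≤ T → Δfun β g0 g1 t = -β := by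
    intro t ht
    induction t, ht using Nat.le_induction with
    | base =>
      intro h
      change min 0 (max (-β) (Δfun β g0 g1 1 + (g0 2 - g1 2))) = _
      rw [D1, h0t 2 le_rfl h, h1t 2 le_rfl h, max_eq_left (by linarith),
        min_eq_right (by linarith)]
    | succ n hn ih =>
      intro h
      change min 0 (max (-β) (Δfun β g0 g1 n + (g0 (n+1) - g1 (n+1)))) = _
      rw [ih (by omega), h0t _ (by omega) h, h1t _ (by omega) h, max_eq_left (by linarith),
        min_eq_right (by linarith)]
  have x1 : (β + Δfun β g0 g1 1) / β = δ := by
    rw [D1]; field_simp; ring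
  have x0 : (β + Δfun β g0 g1 0) / β = 0 := by
    rw [D0]; simp
  have xt : ∀ t, 2 ≤ t → t ≤ T → (β + Δfun β g0 g1 t) / β = 0 := by
    intro t h1 h2
    rw [Dt t h1 h2]; simp
  have xnn : ∀ t, 1 ≤ t → t ≤ T → 0 ≤ (β + Δfun β g0 g1 t) / β := by
    intro t h1 h2
    rcases Nat.lt_or_ge t 2 with h | h
    · obtain rfl : t = 1 := by omega
      rw [x1]; exact hδ0.le
    · rw [xt t h h2]
  refine ⟨x1, xt, ?_, ?_⟩
  · unfold cost
    rw [Finset.sum_eq_single 1]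
    · simp only [Nat.sub_self]
      rw [x1, x0, h01, h11, max_eq_left (by linarith)]
      ring
    · intro t ht hne
      obtain ⟨ha, hb⟩ := Finset.mem_Icc.mp ht
      have := xnn (t-1) (by omega) (by omega)
      beta_reduce
      rw [xt t (by omega) hb, h0t t (by omega) hb, max_eq_right (by linarith)]
      ring
    · intro h
      exact absurd (Finset.mem_Icc.mpr ⟨le_rfl, by omega⟩) h
  · unfold copt
    apply IsLeast.csInf_eq
    constructor
    · refine ⟨fun _ => 0, fun _ => ⟨le_rfl, zero_le_one⟩, rfl, ?_⟩
      unfold cost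
      rw [Finset.sum_eq_single 1]
      · simp [h01]
      · intro t ht hne
        obtain ⟨ha, hb⟩ := Finset.mem_Icc.mp ht
        simp [h0t t (by omega) hb]
      · intro h
        exact absurd (Finset.mem_Icc.mpr ⟨le_rfl, by omega⟩) h
    · rintro c ⟨x, hx, hx0, rfl⟩
      have key : ((1 - x 1) * g0 1 + x 1 * g1 1 + β * max (x 1 - x (1 - 1)) 0)
          ≤ cost T β g0 g1 x := by
        unfold cost
        refine Finset.single_le_sum
          (f := fun t => (1 - x t) * g0 t + x t * g1 t + β * max (x t - x (t - 1)) 0)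
          ?_ (Finset.mem_Icc.mpr ⟨le_rfl, by omega⟩)
        intro t ht
        obtain ⟨ha, hb⟩ := Finset.mem_Icc.mp ht
        have p0 : 0 ≤ g0 t := by rw [hg0 t ha hb]; split_ifs <;> linarith
        have p1 : 0 ≤ g1 t := by rw [hg1 t ha hb]; split_ifs <;> linarith
        have q := mul_nonneg (sub_nonneg.mpr (hx t).2) p0
        have r := mul_nonneg (hx t).1 p1
        have s := mul_nonneg hβ.le (le_max_right (x t - x (t-1)) 0)
        linarith
      refine le_trans ?_ key
      simp only [Nat.sub_self]
      rw [h01, h11, hx0, sub_zero, max_eq_left (hx 1).1]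
      nlinarith [(hx 1).1, mul_nonneg (hx 1).1 (sub_nonneg.mpr hlt.le)]

/-- tightness of the factor 2 for cCHASE: on the instance with
`g_1(0) = δβ`, `g_1(1) = 0` and `g_t(0) = 0`, `g_t(1) = δβ` for `t ≥ 2`, the
algorithm cCHASE (playing `x_t = (β + Δ(t))/β`) outputs `x_1 = δ` and `x_t = 0`
for `2 ≤ t ≤ T`, its cost is `2δβ − δ²β`, and `cOpt = δβ`. Consequently, for
every `ε > 0` there is an instance with `CCost(cCHASE) ≥ (2 − ε)·cOpt`. -/
theorem stmt13 (β δ : ℝ) (hβ : 0 < β) (hδ0 : 0 < δ) (hδ1 : δ < 1)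
    (T : ℕ) (hT : 2 ≤ T) (g0 g1 : ℕ → ℝ)
    (hg0 : ∀ t, 1 ≤ t → t ≤ T → g0 t = if t = 1 then δ * β else 0)
    (hg1 : ∀ t, 1 ≤ t → t ≤ T → g1 t = if t = 1 then 0 else δ * β) :
    (β + Δfun β g0 g1 1) / β = δ ∧
    (∀ t, 2 ≤ t → t ≤ T → (β + Δfun β g0 g1 t) / β = 0) ∧
    cost T β g0 g1 (fun t => (β + Δfun β g0 g1 t) / β) = 2 * δ * β - δ ^ 2 * β ∧
    copt T β g0 g1 = δ * β ∧
    (∀ ε : ℝ, 0 < ε → ∃ (T' : ℕ) (β' : ℝ), 0 < β' ∧ ∃ g0' g1' : ℕ → ℝ,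
      (∀ t, 1 ≤ t → t ≤ T' → 0 ≤ g0' t ∧ 0 ≤ g1' t) ∧
      (2 - ε) * copt T' β' g0' g1'
        ≤ cost T' β' g0' g1' (fun t => (β' + Δfun β' g0' g1' t) / β')) := by
  obtain ⟨a, b, c, d⟩ := core_aux β δ hβ hδ0 hδ1 T hT g0 g1 hg0 hg1
  refine ⟨a, b, c, d, ?_⟩
  intro ε hε
  have e0 : 0 < min (1/2) ε := lt_min (by norm_num) hε
  have e1 : min (1/2) ε < 1 := lt_of_le_of_lt (min_le_left _ _) (by norm_num)
  have e2 : min (1/2) ε ≤ ε := min_le_right _ _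
  generalize min (1/2) ε = η at e0 e1 e2
  obtain ⟨-, -, c', d'⟩ := core_aux 1 η one_pos e0 e1 2 le_rfl
    (fun t => if t = 1 then η * 1 else 0) (fun t => if t = 1 then 0 else η * 1)
    (fun _ _ _ => rfl) (fun _ _ _ => rfl)
  refine ⟨2, 1, one_pos, (fun t => if t = 1 then η * 1 else 0),
    (fun t => if t = 1 then 0 else η * 1), ?_, ?_⟩
  rotate_left
  · rw [c', d']
    nlinarith
  · intro t _ _
    constructor <;> dsimp only <;> split_ifs <;> linarith
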